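/- Let A ∈ ℝ^{m×n}, b ∈ ℝ^m, and let c, c' ∈ ℝⁿ be two cost vectors such that both LP(c) and LP(c') have finite optimum values. Let s' ∈ ℝⁿ be an optimal dual slack for LP(c'), i.e., s' ≥ 0, s' − c' ∈ Im(Aᵀ), and ⟨s', x'⟩ = 0 for some optimal solution x' of LP(c'). Then for every index j ∈ [n] with s'_j > (m+1) · κ_A · ‖c − c'‖_∞, every optimal solution x* of LP(c) satisfies x*_j = 0. -/

import Mathlib

open Matrix
open scoped BigOperators

noncomputable section
open Classical

/-- The set of elementary vectors of `ker(A)`: support-minimal nonzero kernel vectors. -/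
def elemVecs {α β : Type} [Fintype α] [Fintype β] (A : Matrix α β ℝ) : Set (β → ℝ) :=
  {g | A.mulVec g = 0 ∧ g ≠ 0 ∧
    ∀ h : β → ℝ, A.mulVec h = 0 → h ≠ 0 →
      ¬ ({i | h i ≠ 0} ⊂ {i | g i ≠ 0})}

/-- The circuit imbalance measure `κ_A`. -/
def circImb {α β : Type} [Fintype α] [Fintype β] (A : Matrix α β ℝ) : ℝ :=
  sSup {r : ℝ | ∃ g ∈ elemVecs A, ∃ i j, g i ≠ 0 ∧ g j ≠ 0 ∧ r = |g j| / |g i|}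

/-- The ℓ∞-norm of a vector in `ℝⁿ`. -/
def normInf {n : ℕ} (v : Fin n → ℝ) : ℝ :=
  sSup (Set.range fun i => |v i|)


lemma pvf_unique {m n : ℕ} (A : Matrix (Fin m) (Fin n) ℝ) (g g' : Fin n → ℝ)
    (hg : g ∈ elemVecs A) (hg' : g' ∈ elemVecs A)
    (hs : {i | g i ≠ 0} = {i | g' i ≠ 0}) (i : Fin n) (hi : g i ≠ 0) (k : Fin n) :
    g' i * g k = g i * g' k := by
  by_contra hne
  have hK : A.mulVec (g' i • g - g i • g') = 0 := by
    rw [Matrix.mulVec_sub, Matrix.mulVec_smul, Matrix.mulVec_smul, hg.1, hg'.1]; simp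
  refine hg.2.2 (g' i • g - g i • g') hK ?_ ?_
  · intro h0
    have := congrFun h0 k
    simp only [Pi.sub_apply, Pi.smul_apply, smul_eq_mul, Pi.zero_apply] at this
    exact hne (by linarith)
  · rw [Set.ssubset_iff_of_subset]
    · refine ⟨i, hi, ?_⟩
      simp [mul_comm]
    · intro l hl
      simp only [Set.mem_setOf_eq, Pi.sub_apply, Pi.smul_apply, smul_eq_mul] at hl ⊢
      intro h0
      have h1 : g' l = 0 := by
        by_contra h1
        have : l ∈ {i | g i ≠ 0} := by rw [hs]; exact h1
        exact this h0
      apply hl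
      rw [h0, h1]; ring

lemma pvf_bdd {m n : ℕ} (A : Matrix (Fin m) (Fin n) ℝ) :
    BddAbove {r : ℝ | ∃ g ∈ elemVecs A, ∃ i j, g i ≠ 0 ∧ g j ≠ 0 ∧ r = |g j| / |g i|} := by
  let F : Set (Fin n) × Fin n × Fin n → ℝ := fun p =>
    if h : ∃ g ∈ elemVecs A, {i | g i ≠ 0} = p.1 then
      |h.choose p.2.2| / |h.choose p.2.1| else 0
  refine (Set.finite_range F).bddAbove.mono ?_
  rintro r ⟨g, hg, i, j, hi, hj, rfl⟩
  refine ⟨({i | g i ≠ 0}, i, j), ?_⟩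
  have h : ∃ g' ∈ elemVecs A, {i | g' i ≠ 0} = {i | g i ≠ 0} := ⟨g, hg, rfl⟩
  have hF : F ({i | g i ≠ 0}, i, j) = |h.choose j| / |h.choose i| := dif_pos h
  rw [hF]
  obtain ⟨h1, h2⟩ := h.choose_spec
  generalize h.choose = g' at h1 h2
  have hi' : g' i ≠ 0 := by
    have : i ∈ {i | g' i ≠ 0} := by rw [h2]; exact hi
    exact this
  have := pvf_unique A g g' hg h1 h2.symm i hi j
  rw [div_eq_div_iff (abs_ne_zero.2 hi') (abs_ne_zero.2 hi), ← abs_mul, ← abs_mul]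
  congr 1
  linarith

lemma pvf_card {m n : ℕ} (A : Matrix (Fin m) (Fin n) ℝ) (g : Fin n → ℝ)
    (hg : g ∈ elemVecs A) (j : Fin n) (hj : g j ≠ 0) :
    (Finset.univ.filter fun i => g i ≠ 0).card ≤ m + 1 := by
  by_contra! hlt
  set S := (Finset.univ.filter fun i => g i ≠ 0).erase j with hS
  have hc : m < S.card := by
    rw [hS, Finset.card_erase_of_mem (by simp [hj])]; omega
  let E : (S → ℝ) →ₗ[ℝ] (Fin n → ℝ) :=
    { toFun := fun f i => if h : i ∈ S then f ⟨i, h⟩ else 0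
      map_add' := by
        intro f f'; ext i; by_cases h : i ∈ S <;> simp [h]
      map_smul' := by
        intro f f'; ext i; by_cases h : i ∈ S <;> simp [h] }
  have hk := LinearMap.ker_ne_bot_of_finrank_lt (f := A.mulVecLin ∘ₗ E) (by simpa using hc)
  obtain ⟨f, hf, hf0⟩ := Submodule.exists_mem_ne_zero_of_ne_bot hk
  refine hg.2.2 (E f) (by simpa using hf) ?_ ?_
  · intro h0
    apply hf0
    ext i
    have := congrFun h0 i.1
    simpa [E] using this
  · have hE : ∀ i, i ∉ S → E f i = 0 := by
      intro i hi; simp [E, hi]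
    rw [Set.ssubset_iff_of_subset]
    · refine ⟨j, hj, ?_⟩
      have := hE j (by simp [hS])
      simp [this]
    · intro i hi h0
      exact hi (hE i (by simp [hS, h0]))

lemma pvf_kill {m n : ℕ} (A : Matrix (Fin m) (Fin n) ℝ) (z h : Fin n → ℝ)
    (hz : A.mulVec z = 0) (hh : A.mulVec h = 0) (hs : ∀ i, z i = 0 → h i = 0)
    (j : Fin n) (hj : 0 < z j) (hhj : 0 ≤ h j) (hv : ∃ i, h i * z i < 0) :
    ∃ w : Fin n → ℝ, A.mulVec w = 0 ∧ 0 < w j ∧ (∀ i, w i ≠ 0 → 0 < z i * w i) ∧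
      ∃ k, z k ≠ 0 ∧ w k = 0 := by
  obtain ⟨i0, hi0⟩ := hv
  obtain ⟨k, hk, hmin⟩ := Finset.exists_min_image (Finset.univ.filter fun i => h i * z i < 0)
    (fun i => - z i / h i) ⟨i0, by simp [hi0]⟩
  simp only [Finset.mem_filter, Finset.mem_univ, true_and] at hk hmin
  have hk0 : h k ≠ 0 := by rintro h0; simp [h0] at hk
  have hzk0 : z k ≠ 0 := by rintro h0; simp [h0] at hk
  set t := - z k / h k with ht
  have htpos : 0 < t := by
    have : t = -(h k * z k) / (h k)^2 := by rw [ht]; field_simp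
    rw [this]
    have : 0 < (h k)^2 := by positivity
    apply div_pos _ this
    linarith
  refine ⟨z + t • h, ?_, ?_, ?_, k, hzk0, ?_⟩
  · rw [Matrix.mulVec_add, Matrix.mulVec_smul, hz, hh]; simp
  · simp only [Pi.add_apply, Pi.smul_apply, smul_eq_mul]; positivity
  · intro i hi
    simp only [Pi.add_apply, Pi.smul_apply, smul_eq_mul] at hi ⊢
    have hzi : z i ≠ 0 := by
      intro h0; apply hi; rw [h0, hs i h0]; ring
    refine lt_of_le_of_ne ?_ (mul_ne_zero hzi hi).symm
    rcases lt_or_ge (h i * z i) 0 with hneg | hpos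
    · have h1 := hmin i hneg
      have h2 : h i ≠ 0 := by rintro h0; simp [h0] at hneg
      have h3 : (-z i / h i) * (h i * z i) ≤ t * (h i * z i) :=
        mul_le_mul_of_nonpos_right h1 hneg.le
      have h4 : (-z i / h i) * (h i * z i) = - (z i * z i) := by field_simp
      nlinarith
    · nlinarith [mul_nonneg htpos.le hpos, mul_self_nonneg (z i)]
  · simp only [Pi.add_apply, Pi.smul_apply, smul_eq_mul, ht]; field_simp; ring

lemma pvf_conf {m n : ℕ} (A : Matrix (Fin m) (Fin n) ℝ) (j : Fin n) (N : ℕ) :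
    ∀ z : Fin n → ℝ, (Finset.univ.filter fun i => z i ≠ 0).card ≤ N →
    A.mulVec z = 0 → 0 < z j →
    ∃ g ∈ elemVecs A, 0 < g j ∧ ∀ i, g i ≠ 0 → 0 < z i * g i := by
  induction N with
  | zero =>
    intro z hc _ hj
    have : j ∈ (Finset.univ.filter fun i => z i ≠ 0) := by simp [hj.ne']
    rw [Finset.card_eq_zero.1 (Nat.le_zero.1 hc)] at this
    simp at this
  | succ N ih =>
    intro z hc hz hj
    by_cases hel : z ∈ elemVecs A
    · refine ⟨z, hel, hj, fun i hi => mul_self_pos.2 hi⟩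
    -- a conformal vector with smaller support finishes
    have key : ∀ w : Fin n → ℝ, A.mulVec w = 0 → 0 < w j →
        (∀ i, w i ≠ 0 → 0 < z i * w i) → (∃ k, z k ≠ 0 ∧ w k = 0) →
        ∃ g ∈ elemVecs A, 0 < g j ∧ ∀ i, g i ≠ 0 → 0 < z i * g i := by
      intro w hw hwj hconf ⟨k, hzk, hwk⟩
      have hlt : (Finset.univ.filter fun i => w i ≠ 0).card <
          (Finset.univ.filter fun i => z i ≠ 0).card := by
        apply Finset.card_lt_card
        rw [Finset.ssubset_iff_of_subset]
        · exact ⟨k, by simp [hzk], by simp [hwk]⟩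
        · intro i hi
          simp only [Finset.mem_filter, Finset.mem_univ, true_and] at hi ⊢
          intro h0
          have := hconf i hi
          simp [h0] at this
      obtain ⟨g, hg, hgj, hgc⟩ := ih w (by omega) hw hwj
      refine ⟨g, hg, hgj, fun i hi => ?_⟩
      have h1 := hgc i hi
      have h2 : w i ≠ 0 := by rintro h0; simp [h0] at h1
      have h3 := hconf i h2
      have h4 : 0 < (z i * g i) * (w i * w i) := by nlinarith [mul_pos h1 h3]
      exact pos_of_mul_pos_left h4 (mul_self_nonneg _)
    have hz0 : z ≠ 0 := by rintro rfl; simp at hj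
    have : ∃ h : Fin n → ℝ, A.mulVec h = 0 ∧ h ≠ 0 ∧ {i | h i ≠ 0} ⊂ {i | z i ≠ 0} := by
      by_contra! hcon
      exact hel ⟨hz, hz0, fun h h1 h2 => hcon h h1 h2⟩
    obtain ⟨h₀, hh₀, hne₀, hss₀⟩ := this
    have : ∃ h : Fin n → ℝ, A.mulVec h = 0 ∧ h ≠ 0 ∧ {i | h i ≠ 0} ⊂ {i | z i ≠ 0} ∧ 0 ≤ h j := by
      rcases le_total 0 (h₀ j) with h1 | h1
      · exact ⟨h₀, hh₀, hne₀, hss₀, h1⟩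
      · refine ⟨-h₀, by rw [Matrix.mulVec_neg, hh₀, neg_zero], neg_ne_zero.2 hne₀, ?_, ?_⟩
        · simpa using hss₀
        · simpa using h1
    obtain ⟨h, hh, hne, hss, hhj⟩ := this
    have hsub : ∀ i, z i = 0 → h i = 0 := by
      intro i hi
      by_contra h1
      exact hss.1 h1 hi
    by_cases hv : ∃ i, h i * z i < 0
    · obtain ⟨w, h1, h2, h3, h4⟩ := pvf_kill A z h hz hh hsub j hj hhj hv
      exact key w h1 h2 h3 h4
    push Not at hv
    rcases hhj.lt_or_eq with hpos | hzero
    · refine key h hh hpos ?_ ?_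
      · intro i hi
        have h1 : z i ≠ 0 := fun h0 => hi (hsub i h0)
        have := hv i
        rw [mul_comm] at this
        exact lt_of_le_of_ne this (mul_ne_zero h1 hi).symm
      · obtain ⟨k, hk1, hk2⟩ := Set.exists_of_ssubset hss
        exact ⟨k, hk1, by simpa using hk2⟩
    · have : ∃ i, h i ≠ 0 := Function.ne_iff.1 hne
      obtain ⟨i, hi⟩ := this
      have h1 : z i ≠ 0 := fun h0 => hi (hsub i h0)
      have h2 := lt_of_le_of_ne (hv i) (mul_ne_zero hi h1).symm
      obtain ⟨w, h1, h2, h3, h4⟩ := pvf_kill A z (-h) hz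
        (by rw [Matrix.mulVec_neg, hh, neg_zero]) (fun i hi => by simp [hsub i hi]) j hj
        (by simp [← hzero]) ⟨i, by simpa using h2⟩
      exact key w h1 h2 h3 h4

/-- Proximity-based variable fixing: if `s'` is an optimal dual slack for `LP(c')` and
`s'_j > (m+1) κ_A ‖c - c'‖_∞`, then `x*_j = 0` in every optimal solution of `LP(c)`. -/
theorem proximity_variable_fixing {m n : ℕ} (A : Matrix (Fin m) (Fin n) ℝ) (b : Fin m → ℝ)
    (c c' : Fin n → ℝ)
    (P : Set (Fin n → ℝ)) (hP : P = {z : Fin n → ℝ | A.mulVec z = b ∧ 0 ≤ z})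
    (hcopt : ∃ xo ∈ P, ∀ z ∈ P, c ⬝ᵥ xo ≤ c ⬝ᵥ z)
    (s' : Fin n → ℝ) (hs'nonneg : 0 ≤ s')
    (hs'dual : ∃ y : Fin m → ℝ, s' - c' = A.transpose.mulVec y)
    (hs'opt : ∃ x' ∈ P, (∀ z ∈ P, c' ⬝ᵥ x' ≤ c' ⬝ᵥ z) ∧ s' ⬝ᵥ x' = 0) :
    ∀ j : Fin n, s' j > ((m : ℝ) + 1) * circImb A * normInf (c - c') →
      ∀ xstar ∈ P, (∀ z ∈ P, c ⬝ᵥ xstar ≤ c ⬝ᵥ z) → xstar j = 0 := by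
  subst hP
  intro j hsj x hx hxopt
  obtain ⟨x', hx', -, hcs⟩ := hs'opt
  obtain ⟨y, hy⟩ := hs'dual
  have hnb : BddAbove (Set.range fun i => |(c - c') i|) := (Set.finite_range _).bddAbove
  have hN0 : 0 ≤ normInf (c - c') := Real.sSup_nonneg (by rintro _ ⟨i, rfl⟩; positivity)
  have hK0 : 0 ≤ circImb A :=
    Real.sSup_nonneg (by rintro _ ⟨g, _, i, j, _, _, rfl⟩; positivity)
  have hsj0 : 0 < s' j := lt_of_le_of_lt (by positivity) hsj
  have hcs' : ∀ i, s' i * x' i = 0 := by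
    intro i
    have := (Finset.sum_eq_zero_iff_of_nonneg
      (fun i _ => mul_nonneg (hs'nonneg i) (hx'.2 i))).1 hcs i (Finset.mem_univ i)
    exact this
  have hx'j : x' j = 0 := (mul_eq_zero.1 (hcs' j)).resolve_left hsj0.ne'
  by_contra hxj
  have hxj0 : 0 < x j := lt_of_le_of_ne (hx.2 j) (Ne.symm hxj)
  obtain ⟨g, hg, hgj, hconf⟩ := pvf_conf A j _ (x - x') le_rfl
    (by rw [Matrix.mulVec_sub, hx.1, hx'.1, sub_self]) (by simpa [hx'j] using hxj0)
  -- step along g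
  have hstep : ∃ ε : ℝ, 0 < ε ∧ ∀ i, ε * g i ≤ x i := by
    obtain ⟨k, hk, hmin⟩ := Finset.exists_min_image (Finset.univ.filter fun i => 0 < g i)
      (fun i => x i / g i) ⟨j, by simp [hgj]⟩
    simp only [Finset.mem_filter, Finset.mem_univ, true_and] at hk hmin
    have hxp : 0 < x k := by
      have h1 := hconf k hk.ne'
      have h2 := pos_of_mul_pos_left h1 hk.le
      have h3 : (0:ℝ) ≤ x' k := hx'.2 k
      simp only [Pi.sub_apply] at h2
      linarith
    refine ⟨x k / g k, by positivity, fun i => ?_⟩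
    rcases lt_or_ge 0 (g i) with h | h
    · exact (le_div_iff₀ h).1 (hmin i h)
    · have h1 : 0 < x k / g k := by positivity
      have h2 : (0:ℝ) ≤ x i := hx.2 i
      nlinarith
  obtain ⟨ε, hε, hεx⟩ := hstep
  have hcg : c ⬝ᵥ g ≤ 0 := by
    have := hxopt (x - ε • g) ⟨by rw [Matrix.mulVec_sub, Matrix.mulVec_smul, hg.1, hx.1]; simp,
      fun i => by simpa using hεx i⟩
    rw [dotProduct_sub, dotProduct_smul, smul_eq_mul] at this
    nlinarith
  have hsg : s' ⬝ᵥ g = c' ⬝ᵥ g := by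
    have : (s' - c') ⬝ᵥ g = 0 := by
      rw [hy, Matrix.mulVec_transpose, ← Matrix.dotProduct_mulVec, hg.1, dotProduct_zero]
    rw [sub_dotProduct] at this
    linarith
  have hlow : s' j * g j ≤ s' ⬝ᵥ g := by
    refine Finset.single_le_sum (f := fun i => s' i * g i) (fun i _ => ?_) (Finset.mem_univ j)
    rcases le_or_gt 0 (g i) with h | h
    · exact mul_nonneg (hs'nonneg i) h
    · have h1 := hconf i h.ne
      simp only [Pi.sub_apply] at h1
      have h2 : (0:ℝ) ≤ x i := hx.2 i
      have h3 : x' i ≠ 0 := by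
        intro h0
        rw [h0] at h1
        nlinarith
      have h4 := (mul_eq_zero.1 (hcs' i)).resolve_right h3
      simp [h4]
  have hgi : ∀ i, g i ≠ 0 → |g i| ≤ circImb A * g j := by
    intro i hi
    have : |g i| / |g j| ≤ circImb A := le_csSup (pvf_bdd A) ⟨g, hg, j, i, hgj.ne', hi, rfl⟩
    rw [abs_of_pos hgj] at this
    exact (div_le_iff₀ hgj).1 this
  have hup : (c' - c) ⬝ᵥ g ≤ ((m:ℝ) + 1) * (normInf (c - c') * (circImb A * g j)) := by
    have h1 : (c' - c) ⬝ᵥ g = ∑ i ∈ Finset.univ.filter (fun i => g i ≠ 0), (c' - c) i * g i := by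
      rw [Finset.sum_filter_of_ne]
      · rfl
      · intro i _ h h0
        simp [h0] at h
    rw [h1]
    have hcard := pvf_card A g hg j hgj.ne'
    refine (Finset.sum_le_card_nsmul _ _ (normInf (c - c') * (circImb A * g j)) ?_).trans ?_
    · intro i hi
      simp only [Finset.mem_filter, Finset.mem_univ, true_and] at hi
      calc (c' - c) i * g i ≤ |(c' - c) i * g i| := le_abs_self _
        _ = |(c - c') i| * |g i| := by
          rw [abs_mul]; congr 1; simp only [Pi.sub_apply]; exact abs_sub_comm _ _
        _ ≤ _ := mul_le_mul (le_csSup hnb ⟨i, rfl⟩) (hgi i hi) (abs_nonneg _) hN0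
    · rw [nsmul_eq_mul]
      refine mul_le_mul_of_nonneg_right (by exact_mod_cast hcard) (by positivity)
  rw [sub_dotProduct] at hup
  have := mul_lt_mul_of_pos_right hsj hgj
  nlinarith
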